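/- Let k ≥ 1. A tree with boundary G has the Faber-Krahn property in the class T^{(·,k)} of all trees with boundary with exactly k interior vertices (with arbitrary total number of vertices) if and only if G is a path with k+2 vertices, and G is then uniquely determined up to isomorphism. -/

import Mathlib

/-!
Let `G` be a tree with boundary with `k` interior vertices, let `d` be its diameter, attained by the
pair `x`, `y`, and let `e v = max (dist x v) (dist y v)`, which is the eccentricity of `v`. The
function `g v = sin (π e v / d)` (`superFun`) is positive in the interior and is a supersolution:
at an interior vertex `v` all neighbours except possibly one have eccentricity `e v + 1`, the
remaining one contributes at most `sin (π (e v - 1) / d)`, and the sine addition formula gives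
`Δ g ≥ (2 - 2 cos (π / d)) g`, with a strictly positive surplus as soon as `deg v > 2`
(`superFun_lap`).

Barta's inequality (`barta`), proved by comparing an eigenfunction with the smallest multiple of `g`
that dominates it, turns this into `λ(G) ≥ 2 - 2 cos (π / d)`. If equality holds, contact between
the eigenfunction and the multiple of `g` spreads over the whole tree, `g` is an eigenfunction, and
so every interior vertex has degree two (`bound_of_diam`).

The inner vertices of a longest path are interior, so `d ≤ k + 1` and
`λ(G) ≥ 2 - 2 cos (π / (k + 1))` (`lower_bound`). The path with `k + 2` vertices has the eigenfunction
`sin (π i / (k + 1))`, hence attains this bound (`pathGraph_eigenpair`). Conversely, attaining the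
bound forces `d = k + 1` and interior degrees two; the degree sum formula then gives `k + 2`
vertices, and a longest path is all of `G` (`path_of_le`).
-/

/-!
Common definitions for Faber-Krahn type inequalities for trees
(Bıyıkoğlu–Leydold, "Faber-Krahn Type Inequalities for Trees").

A *tree (graph) with boundary* is a finite simple connected graph in which
boundary vertices are exactly the vertices of degree 1 and interior vertices
are the vertices of degree ≥ 2; both sets are required to be nonempty.
The Dirichlet operator is the Laplacian restricted to functions vanishing on
the boundary; `dirichletLambda` is its smallest eigenvalue.
-/

open Finset
open scoped Classical

noncomputable section

namespace FK

variable {V : Type*} [Fintype V] [DecidableEq V]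

/-- A vertex is a boundary vertex iff it has degree `1`. -/
def IsBoundary (G : SimpleGraph V) (v : V) : Prop := G.degree v = 1

/-- A vertex is an interior vertex iff it has degree at least `2`. -/
def IsInterior (G : SimpleGraph V) (v : V) : Prop := 2 ≤ G.degree v

/-- A tree with boundary: a tree with at least one interior and
one boundary vertex. -/
def IsTreeWithBoundary (G : SimpleGraph V) : Prop :=
  G.IsTree ∧ (∃ v, IsInterior G v) ∧ (∃ v, IsBoundary G v)

/-- A connected graph with boundary: every vertex is either a boundary vertex
(degree 1) or an interior vertex (degree ≥ 2), both kinds occur, and no edge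
joins two boundary vertices. -/
def IsGraphWithBoundary (G : SimpleGraph V) : Prop :=
  G.Connected ∧ (∀ v, IsBoundary G v ∨ IsInterior G v) ∧
    (∃ v, IsInterior G v) ∧ (∃ v, IsBoundary G v) ∧
    (∀ v w, G.Adj v w → IsBoundary G v → ¬ IsBoundary G w)

/-- The finset of interior vertices. -/
def interiorFinset (G : SimpleGraph V) : Finset V := univ.filter (fun v => IsInterior G v)

/-- The finset of boundary vertices. -/
def boundaryFinset (G : SimpleGraph V) : Finset V := univ.filter (fun v => IsBoundary G v)

/-- The degree sequence of `G`, as a multiset. -/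
def degreeMultiset (G : SimpleGraph V) : Multiset ℕ := Finset.univ.val.map (fun v => G.degree v)

/-- The graph Laplacian `Δ = D - A` applied to a function `f : V → ℝ`. -/
def lapApply (G : SimpleGraph V) (f : V → ℝ) (v : V) : ℝ :=
  (G.degree v : ℝ) * f v - ∑ w ∈ G.neighborFinset v, f w

/-- `f` (vanishing on the boundary, nonzero) is an eigenfunction of the
Dirichlet operator `Δ₀` with eigenvalue `μ`: the eigenvalue equation holds at
every interior vertex. -/
def IsDirichletEigenpair (G : SimpleGraph V) (μ : ℝ) (f : V → ℝ) : Prop :=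
  f ≠ 0 ∧ (∀ v, IsBoundary G v → f v = 0) ∧
    ∀ v, IsInterior G v → lapApply G f v = μ * f v

/-- The first (smallest) Dirichlet eigenvalue `λ(G)`. -/
def dirichletLambda (G : SimpleGraph V) : ℝ :=
  sInf {μ : ℝ | ∃ f : V → ℝ, IsDirichletEigenpair G μ f}

/-- The quadratic form `⟨Δ f, f⟩ = Σ_{(u,v)∈E} (f u - f v)²` of the Laplacian
(each edge counted once). -/
def quadForm (G : SimpleGraph V) (f : V → ℝ) : ℝ :=
  (∑ v, ∑ w ∈ G.neighborFinset v, (f v - f w) ^ 2) / 2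

/-- The Rayleigh quotient `R_G(f)`. -/
def rayleigh (G : SimpleGraph V) (f : V → ℝ) : ℝ :=
  quadForm G f / ∑ v, f v ^ 2

/-- `w` is a child of `v` in the tree `G` rooted at `v₀`
(heights are distances from the root `v₀`). -/
def IsChild (G : SimpleGraph V) (v₀ v w : V) : Prop :=
  G.Adj v w ∧ G.dist v₀ w = G.dist v₀ v + 1

/-- A spiral-like ordering (SLO-ordering) of the vertices of the tree `G`
rooted at `v₀`: a (strict) well-ordering `lt` satisfying (S1)-(S3). -/
def IsSLOOrdering (G : SimpleGraph V) (v₀ : V) (lt : V → V → Prop) : Prop :=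
  IsStrictTotalOrder V lt ∧
  (∀ v w, lt v w → G.dist v₀ v ≤ G.dist v₀ w) ∧
  (∀ v₁ v₂ w₁ w₂, lt v₁ v₂ → IsChild G v₀ v₁ w₁ → IsChild G v₀ v₂ w₂ → lt w₁ w₂) ∧
  (∀ v w, lt v w → IsBoundary G v → IsBoundary G w)

/-- A spiral-like ordering with increasing degrees (SLO*-ordering):
additionally (S4). -/
def IsSLOStarOrdering (G : SimpleGraph V) (v₀ : V) (lt : V → V → Prop) : Prop :=
  IsSLOOrdering G v₀ lt ∧
  ∀ v w, lt v w → IsInterior G v → IsInterior G w → G.degree v ≤ G.degree w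

/-- An SLO-tree: a tree with boundary admitting an SLO-ordering. -/
def IsSLOTree (G : SimpleGraph V) : Prop :=
  IsTreeWithBoundary G ∧ ∃ (v₀ : V) (lt : V → V → Prop), IsSLOOrdering G v₀ lt

/-- An SLO*-tree: a tree with boundary admitting an SLO*-ordering. -/
def IsSLOStarTree (G : SimpleGraph V) : Prop :=
  IsTreeWithBoundary G ∧ ∃ (v₀ : V) (lt : V → V → Prop), IsSLOStarOrdering G v₀ lt

end FK

namespace FK

open SimpleGraph Real

/-! ### The spectrum of the Dirichlet operator -/

section Spectrum

variable {V : Type*} [Fintype V] {G : SimpleGraph V}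

lemma IsTreeWithBoundary.isBoundary_or_isInterior (hG : IsTreeWithBoundary G) (v : V) :
    IsBoundary G v ∨ IsInterior G v := by
  obtain ⟨hT, ⟨a, ha⟩, ⟨b, hb⟩⟩ := hG
  have : Nontrivial V := ⟨a, b, by
    rintro rfl
    unfold IsInterior at ha
    unfold IsBoundary at hb
    omega⟩
  have := hT.connected.preconnected.degree_pos_of_nontrivial v
  unfold IsBoundary IsInterior
  omega

/-- The matrix of the Dirichlet operator `Δ₀`, indexed by the interior vertices. -/
def dirichletMatrix (G : SimpleGraph V) : Matrix {v // IsInterior G v} {v // IsInterior G v} ℝ :=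
  (G.lapMatrix ℝ).submatrix Subtype.val Subtype.val

lemma dirichletMatrix_mulVec (f : V → ℝ) (hf : ∀ v, ¬ IsInterior G v → f v = 0)
    (v : {v // IsInterior G v}) :
    (dirichletMatrix G).mulVec (fun w => f w) v = lapApply G f v := by
  have h1 : (G.lapMatrix ℝ).mulVec f v = lapApply G f v := by
    rw [lapMatrix_mulVec_apply]; rfl
  rw [← h1]
  simp only [Matrix.mulVec, dotProduct, dirichletMatrix, Matrix.submatrix_apply]
  refine (Finset.sum_subtype (univ.filter (fun w => IsInterior G w)) (by simp)
    (fun w => G.lapMatrix ℝ v w * f w)).symm.trans (Finset.sum_filter_of_ne ?_)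
  intro x _ hx
  by_contra h
  exact hx (by rw [hf x h, mul_zero])

lemma finite_dirichlet_eigenvalues (hG : IsTreeWithBoundary G) :
    {μ : ℝ | ∃ f : V → ℝ, IsDirichletEigenpair G μ f}.Finite := by
  refine (Matrix.finite_spectrum (dirichletMatrix G)).subset ?_
  rintro μ ⟨f, hf0, hfb, hfi⟩
  have hz : ∀ v, ¬ IsInterior G v → f v = 0 := fun v hv =>
    hfb v ((hG.isBoundary_or_isInterior v).resolve_right hv)
  rw [← Matrix.spectrum_toLin']
  refine Module.End.HasEigenvalue.mem_spectrum
    (Module.End.hasEigenvalue_of_hasEigenvector (x := fun w => f w) ⟨?_, ?_⟩)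
  · rw [Module.End.mem_eigenspace_iff]
    ext v
    rw [Matrix.toLin'_apply, dirichletMatrix_mulVec f hz, hfi v v.2]
    rfl
  · intro h
    apply hf0
    ext v
    by_cases hv : IsInterior G v
    · exact congrFun h ⟨v, hv⟩
    · exact hz v hv

lemma nonempty_dirichlet_eigenvalues (hG : IsTreeWithBoundary G) :
    {μ : ℝ | ∃ f : V → ℝ, IsDirichletEigenpair G μ f}.Nonempty := by
  obtain ⟨a, ha⟩ := hG.2.1
  have hM : (dirichletMatrix G).IsHermitian := (G.isHermitian_lapMatrix ℝ).submatrix _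
  let i : {v // IsInterior G v} := ⟨a, ha⟩
  let h := hM.eigenvectorBasis i
  let f : V → ℝ := fun v => if hv : IsInterior G v then h ⟨v, hv⟩ else 0
  have hz : ∀ v, ¬ IsInterior G v → f v = 0 := fun v hv => dif_neg hv
  have hfh : (fun w : {v // IsInterior G v} => f w) = ⇑h := by
    ext w
    simp [f, w.2]
  refine ⟨hM.eigenvalues i, f, ?_, ?_, ?_⟩
  · intro hf
    apply hM.eigenvectorBasis.orthonormal.ne_zero i
    ext w
    change h w = 0
    rw [← congrFun hfh w, hf]
    rfl
  · intro v hv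
    apply hz
    unfold IsInterior
    rw [hv]
    norm_num
  · intro v hv
    rw [← dirichletMatrix_mulVec f hz ⟨v, hv⟩, hfh]
    have := congrFun (hM.mulVec_eigenvectorBasis i) ⟨v, hv⟩
    rw [this]
    change _ * h ⟨v, hv⟩ = _
    rw [← congrFun hfh ⟨v, hv⟩]

lemma exists_eigenpair_dirichletLambda (hG : IsTreeWithBoundary G) :
    ∃ f : V → ℝ, IsDirichletEigenpair G (dirichletLambda G) f :=
  (nonempty_dirichlet_eigenvalues hG).csInf_mem (finite_dirichlet_eigenvalues hG)

lemma dirichletLambda_le (hG : IsTreeWithBoundary G) {μ : ℝ} {f : V → ℝ}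
    (hf : IsDirichletEigenpair G μ f) : dirichletLambda G ≤ μ :=
  csInf_le (finite_dirichlet_eigenvalues hG).bddBelow ⟨f, hf⟩

end Spectrum

/-! ### Barta's inequality -/

section Barta

variable {V : Type*} [Fintype V] {G : SimpleGraph V}

/-- At a vertex where `f` touches the supersolution `t • g` from below, the eigenvalue of `f` is at
least `μ`; in case of equality `g` solves the eigenvalue equation there, and `f` touches `t • g` at
all the neighbours as well. -/
lemma barta_touch {g f : V → ℝ} {μ ν t : ℝ} {v : V} (ht : 0 < t)
    (hle : ∀ w, f w ≤ t * g w) (hv : f v = t * g v) (hgv : 0 < g v)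
    (hg : μ * g v ≤ lapApply G g v) (hf : lapApply G f v = ν * f v) :
    μ ≤ ν ∧ (ν = μ → lapApply G g v = μ * g v ∧ ∀ w, G.Adj v w → f w = t * g w) := by
  have key : lapApply G f v
      = t * lapApply G g v + ∑ w ∈ G.neighborFinset v, (t * g w - f w) := by
    unfold lapApply
    rw [Finset.sum_sub_distrib, ← Finset.mul_sum, hv]
    ring
  have hnn : ∀ w ∈ G.neighborFinset v, 0 ≤ t * g w - f w := fun w _ => sub_nonneg.2 (hle w)
  have hsum := Finset.sum_nonneg hnn
  have hpos : 0 < t * g v := mul_pos ht hgv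
  have h1 : t * (μ * g v) ≤ t * lapApply G g v := mul_le_mul_of_nonneg_left hg ht.le
  rw [hf, hv] at key
  refine ⟨?_, ?_⟩
  · by_contra h
    nlinarith [mul_pos (sub_pos.2 (not_le.1 h)) hpos]
  · rintro rfl
    have h2 : ∑ w ∈ G.neighborFinset v, (t * g w - f w) = 0 := by nlinarith
    refine ⟨?_, fun w hw => ?_⟩
    · rw [h2] at key
      apply mul_left_cancel₀ ht.ne'
      linarith
    · have := (Finset.sum_eq_zero_iff_of_nonneg hnn).1 h2 w (by simpa using hw)
      linarith

/-- Barta's inequality with its equality case: if `g ≥ 0` is positive in the interior and satisfies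
`Δ g ≥ μ g` there, then every Dirichlet eigenvalue is at least `μ`, and if `μ` is a Dirichlet
eigenvalue then `Δ g = μ g` in the interior. -/
lemma barta (hG : IsTreeWithBoundary G) {g f : V → ℝ} {μ ν : ℝ}
    (hg0 : ∀ v, 0 ≤ g v) (hgpos : ∀ v, IsInterior G v → 0 < g v)
    (hg : ∀ v, IsInterior G v → μ * g v ≤ lapApply G g v)
    (hf : IsDirichletEigenpair G ν f) :
    μ ≤ ν ∧ (ν = μ → ∀ v, IsInterior G v → lapApply G g v = μ * g v) := by
  obtain ⟨hf0, hfb, hfi⟩ := hf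
  have hint : (interiorFinset G).Nonempty := by
    obtain ⟨a, ha⟩ := hG.2.1
    exact ⟨a, by simpa [interiorFinset] using ha⟩
  obtain ⟨v₀, hv₀, hmax⟩ := Finset.exists_max_image (interiorFinset G) (fun v => |f v| / g v) hint
  replace hv₀ : IsInterior G v₀ := by simpa [interiorFinset] using hv₀
  set t := |f v₀| / g v₀ with ht_def
  have hmax' : ∀ v, IsInterior G v → |f v| ≤ t * g v := fun v hv =>
    (div_le_iff₀ (hgpos v hv)).1 (hmax v (by simpa [interiorFinset] using hv))
  have htnn : 0 ≤ t := div_nonneg (abs_nonneg _) (hg0 _)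
  have ht : 0 < t := by
    refine htnn.lt_of_ne fun h => hf0 ?_
    ext v
    rcases hG.isBoundary_or_isInterior v with hv | hv
    · exact hfb v hv
    · have := hmax' v hv
      rw [← h, zero_mul] at this
      simpa using this
  have hall : ∀ v, |f v| ≤ t * g v := fun v => by
    rcases hG.isBoundary_or_isInterior v with hv | hv
    · rw [hfb v hv, abs_zero]
      exact mul_nonneg htnn (hg0 v)
    · exact hmax' v hv
  have htv₀ : |f v₀| = t * g v₀ := by
    rw [ht_def, div_mul_cancel₀ _ (hgpos _ hv₀).ne']
  -- After a change of sign, `f` is nonnegative at the vertex where the quotient is maximal.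
  obtain ⟨F, hFle, hFv₀, hFi⟩ : ∃ F : V → ℝ, (∀ v, F v ≤ t * g v) ∧ F v₀ = t * g v₀ ∧
      ∀ v, IsInterior G v → lapApply G F v = ν * F v := by
    rcases abs_choice (f v₀) with h | h
    · exact ⟨f, fun v => (le_abs_self _).trans (hall v), h.symm.trans htv₀, hfi⟩
    · refine ⟨fun v => - f v, fun v => (neg_le_abs _).trans (hall v), h.symm.trans htv₀, fun v hv => ?_⟩
      have := hfi v hv
      unfold lapApply at this ⊢
      rw [Finset.sum_neg_distrib]
      linarith
  have htouch : ∀ v, IsInterior G v → F v = t * g v → _ := fun v hv h =>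
    barta_touch (G := G) (μ := μ) ht hFle h (hgpos v hv) (hg v hv) (hFi v hv)
  refine ⟨(htouch v₀ hv₀ hFv₀).1, fun hνμ v hv => ?_⟩
  -- Contact propagates along edges; a boundary vertex is only met at the end of a path.
  suffices h : F v = t * g v from ((htouch v hv h).2 hνμ).1
  obtain ⟨p, hp⟩ := hG.1.connected.exists_isPath v₀ v
  have hmem : ∀ i, i ≤ p.length → F (p.getVert i) = t * g (p.getVert i) := by
    intro i
    induction i with
    | zero => intro _; simpa using hFv₀
    | succ i ih =>
      intro hi
      have hadj := p.adj_getVert_succ (i := i) (by omega)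
      have hI : IsInterior G (p.getVert i) := by
        rcases Nat.eq_zero_or_pos i with rfl | hpos
        · simpa using hv₀
        · obtain ⟨j, rfl⟩ : ∃ j, i = j + 1 := ⟨i - 1, by omega⟩
          have hadj' := p.adj_getVert_succ (i := j) (by omega)
          have hne : p.getVert j ≠ p.getVert (j + 1 + 1) := fun h => by
            have := hp.getVert_injOn (by simp; omega) (by simp; omega) h
            omega
          unfold IsInterior
          rw [← card_neighborFinset_eq_degree, Nat.succ_le_iff, Finset.one_lt_card]
          exact ⟨_, by simpa using hadj'.symm, _, by simpa using hadj, hne⟩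
      exact ((htouch _ hI (ih (by omega))).2 hνμ).2 _ hadj
  simpa using hmem p.length le_rfl

end Barta

/-! ### A supersolution on a tree -/

section Super

variable {V : Type*} {G : SimpleGraph V}

/-- In a tree, at most one neighbour of a vertex `v` is closer to `z` than `v`. -/
lemma eq_of_closer (hT : G.IsTree) {v z w₁ w₂ : V} (h₁ : G.Adj v w₁) (h₂ : G.Adj v w₂)
    (hd₁ : G.dist z v = G.dist z w₁ + 1) (hd₂ : G.dist z v = G.dist z w₂ + 1) : w₁ = w₂ := by
  obtain ⟨p₁, hp₁⟩ := hT.connected.exists_walk_length_eq_dist w₁ z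
  obtain ⟨p₂, hp₂⟩ := hT.connected.exists_walk_length_eq_dist w₂ z
  have e₁ : (Walk.cons h₁ p₁).IsPath := Walk.isPath_of_length_eq_dist _ (by
    rw [Walk.length_cons, hp₁, dist_comm (u := v), hd₁, dist_comm (u := w₁)])
  have e₂ : (Walk.cons h₂ p₂).IsPath := Walk.isPath_of_length_eq_dist _ (by
    rw [Walk.length_cons, hp₂, dist_comm (u := v), hd₂, dist_comm (u := w₂)])
  have := (hT.existsUnique_path v z).unique e₁ e₂
  simpa using congrArg Walk.snd this

/-- A vertex different from `z` has a neighbour closer to `z`. -/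
lemma exists_closer (hT : G.IsTree) {v z : V} (hne : 0 < G.dist z v) :
    ∃ u, G.Adj v u ∧ G.dist z v = G.dist z u + 1 := by
  obtain ⟨p, hp⟩ := hT.connected.exists_walk_length_eq_dist v z
  cases p with
  | nil => simp at hne
  | cons h q =>
    rename_i u
    refine ⟨u, h, ?_⟩
    rw [Walk.length_cons, dist_comm] at hp
    have h1 := dist_le q
    rw [dist_comm] at h1
    rcases hT.dist_eq_dist_add_one_of_adj z h with h2 | h2
    · exact h2
    · omega

/-- The larger of the distances to the two vertices `x` and `y`. If `x`, `y` are the ends of a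
longest path of a tree, this is the eccentricity. -/
def ecc (G : SimpleGraph V) (x y v : V) : ℕ := max (G.dist x v) (G.dist y v)

lemma ecc_swap (G : SimpleGraph V) (x y v : V) : ecc G x y v = ecc G y x v := max_comm _ _

lemma dist_le_two_mul_ecc (hT : G.IsTree) (x y v : V) : G.dist x y ≤ 2 * ecc G x y v := by
  have := hT.connected.dist_triangle (u := x) (v := v) (w := y)
  rw [dist_comm (u := v)] at this
  unfold ecc
  omega

lemma ecc_adj (hT : G.IsTree) (x y : V) {v w : V} (h : G.Adj v w) :
    ecc G x y w ≤ ecc G x y v + 1 := by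
  unfold ecc
  have h1 := hT.dist_eq_dist_add_one_of_adj x h
  have h2 := hT.dist_eq_dist_add_one_of_adj y h
  omega

/-- All neighbours of `v` except possibly one, `u`, have larger eccentricity than `v`. The
eccentricity drops by at most one from `v` to `u`, and `u` is no exception if `v` is the midpoint
of a path from `x` to `y`. -/
lemma exists_exceptional (hT : G.IsTree) {x y v : V} (hd : 0 < G.dist x y) :
    ∃ u, G.Adj v u ∧ (∀ w, G.Adj v w → w ≠ u → ecc G x y w = ecc G x y v + 1) ∧
      ecc G x y v ≤ ecc G x y u + 1 ∧
      (2 * ecc G x y v = G.dist x y → ecc G x y u = ecc G x y v + 1) := by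
  wlog hxy : G.dist y v ≤ G.dist x v generalizing x y
  · simpa only [ecc_swap G y x, dist_comm (u := y) (v := x)] using
      this (x := y) (y := x) (by rwa [dist_comm]) (by omega)
  have hec : ecc G x y v = G.dist x v := max_eq_left hxy
  have hpos : 0 < G.dist x v := by
    have := dist_le_two_mul_ecc hT x y v
    omega
  obtain ⟨u, hu, hud⟩ := exists_closer hT hpos
  refine ⟨u, hu, fun w hw hwu => ?_, ?_, fun h => ?_⟩
  · have h1 := ecc_adj hT x y hw
    have h2 : G.dist x w = G.dist x v + 1 := by
      rcases hT.dist_eq_dist_add_one_of_adj x hw with h | h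
      · exact absurd (eq_of_closer hT hw hu h hud) hwu
      · exact h
    have h3 : G.dist x w ≤ ecc G x y w := le_max_left _ _
    omega
  · exact ecc_adj hT x y hu.symm
  · have h1 := ecc_adj hT x y hu
    have h2 := hT.connected.dist_triangle (u := x) (v := u) (w := y)
    have h3 := hT.dist_eq_dist_add_one_of_adj y hu
    rw [dist_comm (u := u)] at h2
    have h4 : G.dist y u ≤ ecc G x y u := le_max_right _ _
    omega

lemma sin_anti {a b : ℝ} (ha : π / 2 ≤ a) (hab : a < b) (hb : b ≤ π) : sin b < sin a := by
  rw [← sin_pi_sub b, ← sin_pi_sub a]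
  exact sin_lt_sin_of_lt_of_le_pi_div_two (by linarith [pi_pos]) (by linarith) (by linarith)

/-- The function `sin (π e / d)` of the eccentricity `e`, where `d` is the length of a longest path,
from `x` to `y`. On the path with `d + 1` vertices it is the first Dirichlet eigenfunction. -/
def superFun (G : SimpleGraph V) (x y v : V) : ℝ :=
  sin (π / G.dist x y * ecc G x y v)

lemma superFun_nonneg {x y : V} (hmax : ∀ a b, G.dist a b ≤ G.dist x y) (v : V) :
    0 ≤ superFun G x y v := by
  have h : (ecc G x y v : ℝ) ≤ G.dist x y := by exact_mod_cast max_le (hmax _ _) (hmax _ _)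
  refine sin_nonneg_of_nonneg_of_le_pi (by positivity) ?_
  rcases Nat.eq_zero_or_pos (G.dist x y) with h0 | h0
  · simp [h0, pi_pos.le]
  · have h0' : (0 : ℝ) < G.dist x y := by exact_mod_cast h0
    rw [div_mul_eq_mul_div, div_le_iff₀ h0']
    exact mul_le_mul_of_nonneg_left h pi_pos.le

variable [Fintype V]

lemma ecc_lt_of_isInterior (hT : G.IsTree) {x y v : V} (hd : 0 < G.dist x y)
    (hmax : ∀ a b, G.dist a b ≤ G.dist x y) (hv : IsInterior G v) :
    ecc G x y v + 1 ≤ G.dist x y := by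
  obtain ⟨u, hu, h1, -⟩ := exists_exceptional (v := v) hT hd
  obtain ⟨w, hw, hwu⟩ : ∃ w ∈ G.neighborFinset v, w ≠ u :=
    Finset.exists_mem_ne (by rw [card_neighborFinset_eq_degree]; exact hv) u
  rw [← h1 w (by simpa using hw) hwu]
  exact max_le (hmax _ _) (hmax _ _)

lemma superFun_pos (hT : G.IsTree) {x y v : V} (hd : 0 < G.dist x y)
    (hmax : ∀ a b, G.dist a b ≤ G.dist x y) (hv : IsInterior G v) :
    0 < superFun G x y v := by
  have h : (ecc G x y v : ℝ) + 1 ≤ G.dist x y := by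
    exact_mod_cast ecc_lt_of_isInterior hT hd hmax hv
  have h2 : (G.dist x y : ℝ) ≤ 2 * ecc G x y v := by exact_mod_cast dist_le_two_mul_ecc hT x y v
  have h0 : (0 : ℝ) < G.dist x y := by exact_mod_cast hd
  have h3 : (0 : ℝ) < ecc G x y v := by linarith
  refine sin_pos_of_pos_of_lt_pi (by positivity) ?_
  rw [div_mul_eq_mul_div, div_lt_iff₀ h0]
  exact mul_lt_mul_of_pos_left (by linarith) pi_pos

/-- The supersolution property, with the surplus at vertices of degree greater than two. -/
lemma superFun_lap (hT : G.IsTree) {x y v : V} (hd : 0 < G.dist x y)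
    (hmax : ∀ a b, G.dist a b ≤ G.dist x y) (hv : IsInterior G v) :
    ∃ δ : ℝ, 0 < δ ∧ (2 - 2 * cos (π / G.dist x y)) * superFun G x y v + (G.degree v - 2) * δ
      ≤ lapApply G (superFun G x y) v := by
  obtain ⟨u, hu, hother, hexc, hcen⟩ := exists_exceptional (v := v) hT hd
  have hlt := ecc_lt_of_isInterior hT hd hmax hv
  have hhalf := dist_le_two_mul_ecc hT x y v
  have hhalfu := dist_le_two_mul_ecc hT x y u
  have hule : ecc G x y u ≤ G.dist x y := max_le (hmax _ _) (hmax _ _)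
  set d := G.dist x y with hd_def
  set e := ecc G x y v with he
  set θ : ℝ := π / d with hθ
  have hd0 : (0 : ℝ) < d := by exact_mod_cast hd
  have hθ0 : 0 < θ := by positivity
  have hθd : θ * d = π := by rw [hθ]; field_simp
  have anti : ∀ a b : ℝ, (d : ℝ) ≤ 2 * a → a < b → b ≤ d → sin (θ * b) < sin (θ * a) := by
    intro a b h1 h2 h3
    refine sin_anti ?_ (mul_lt_mul_of_pos_left h2 hθ0) ?_
    · nlinarith
    · rw [← hθd]
      exact mul_le_mul_of_nonneg_left h3 hθ0.le
  have hrec : sin (θ * (e - 1)) + sin (θ * (e + 1)) = 2 * cos θ * sin (θ * e) := by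
    rw [mul_sub, mul_add, mul_one, sin_sub, sin_add]
    ring
  have hue : superFun G x y u ≤ sin (θ * (e - 1)) := by
    unfold superFun
    rw [← hd_def, ← hθ]
    rcases Nat.lt_or_ge d (2 * e) with h | h
    · rcases Nat.lt_or_ge d (2 * e - 1) with hcase | hcase
      · -- `e - 1 ≥ d / 2`, in the range where the sine decreases
        rcases hexc.eq_or_lt with hstep | hstep
        · rw [hstep]; push_cast; simp
        · refine (anti _ _ ?_ ?_ (by exact_mod_cast hule)).le
          · have : ((d + 2 : ℕ) : ℝ) ≤ (2 * e : ℕ) := by exact_mod_cast (by omega)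
            push_cast at this
            linarith
          · have : (e : ℝ) < (ecc G x y u + 1 : ℕ) := by exact_mod_cast hstep
            push_cast at this
            linarith
      · -- odd diameter, and `v` is one of the two centres: reflect `e - 1` to `e`
        have hde : d = 2 * e - 1 := by omega
        have hde' : (d : ℝ) = 2 * e - 1 := by
          have : d + 1 = 2 * e := by omega
          have : ((d + 1 : ℕ) : ℝ) = (2 * e : ℕ) := by exact_mod_cast this
          push_cast at this
          linarith
        have hrefl : sin (θ * (e - 1)) = sin (θ * e) := by
          rw [← sin_pi_sub, ← hθd, hde']
          congr 1
          ring
        rw [hrefl]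
        have : e ≤ ecc G x y u := by omega
        rcases this.eq_or_lt with hstep | hstep
        · rw [hstep]
        · exact (anti _ _ (by exact_mod_cast hhalf) (by exact_mod_cast hstep)
            (by exact_mod_cast hule)).le
    · -- even diameter, and `v` is the centre
      have hde : 2 * e = d := by omega
      rw [hcen hde]
      have hde' : (d : ℝ) = 2 * e := by exact_mod_cast hde.symm
      apply le_of_eq
      rw [← sin_pi_sub, ← hθd, hde']
      congr 1
      push_cast
      ring
  refine ⟨sin (θ * e) - sin (θ * (e + 1)), ?_, ?_⟩
  · have := anti e (e + 1) (by exact_mod_cast hhalf) (by linarith) (by exact_mod_cast hlt)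
    linarith
  · have hsum : ∑ w ∈ G.neighborFinset v, superFun G x y w
        = superFun G x y u + ((G.degree v : ℝ) - 1) * sin (θ * (e + 1)) := by
      have hmem : u ∈ G.neighborFinset v := by simpa using hu
      rw [← Finset.add_sum_erase _ _ hmem]
      congr 1
      rw [Finset.sum_congr rfl (g := fun _ => sin (θ * (e + 1)))]
      · rw [Finset.sum_const, Finset.card_erase_of_mem hmem, card_neighborFinset_eq_degree,
          nsmul_eq_mul, Nat.cast_sub (by unfold IsInterior at hv; omega), Nat.cast_one]
      · intro w hw
        rw [Finset.mem_erase, mem_neighborFinset] at hw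
        unfold superFun
        rw [hother w hw.2 hw.1]
        push_cast
        rfl
    unfold lapApply
    rw [hsum]
    have hself : superFun G x y v = sin (θ * e) := rfl
    rw [hself]
    linarith

end Super

/-! ### The lower bound and its equality case -/

section Bound

variable {V : Type*} [Fintype V] {G : SimpleGraph V}

lemma exists_diam (hG : IsTreeWithBoundary G) :
    ∃ x y, 0 < G.dist x y ∧ ∀ a b, G.dist a b ≤ G.dist x y := by
  obtain ⟨hT, ⟨a, ha⟩, ⟨b, hb⟩⟩ := hG
  obtain ⟨⟨x, y⟩, -, hmax⟩ := Finset.exists_max_image (univ : Finset (V × V))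
    (fun q => G.dist q.1 q.2) ⟨(a, a), by simp⟩
  refine ⟨x, y, lt_of_lt_of_le (hT.connected.pos_dist_of_ne (u := a) (v := b) ?_)
    (hmax (a, b) (by simp)), fun a b => hmax (a, b) (by simp)⟩
  rintro rfl
  unfold IsInterior at ha
  unfold IsBoundary at hb
  omega

/-- The inner vertices of a geodesic are interior vertices, so there are at least `d - 1` of them. -/
lemma dist_le_card_interior (hT : G.IsTree) (x y : V) :
    G.dist x y ≤ (interiorFinset G).card + 1 := by
  obtain ⟨p, hp, hpl⟩ := hT.connected.exists_path_of_dist x y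
  rw [← hpl, ← Nat.sub_le_iff_le_add, ← Finset.card_range (p.length - 1)]
  refine Finset.card_le_card_of_injOn (fun i => p.getVert (i + 1)) ?_ ?_
  · intro i hi
    have hi' : i < p.length - 1 := by simpa using hi
    have h1 := p.adj_getVert_succ (i := i) (by omega)
    have h2 := p.adj_getVert_succ (i := i + 1) (by omega)
    have hne : p.getVert i ≠ p.getVert (i + 1 + 1) := fun h => by
      have := hp.getVert_injOn (by simp; omega) (by simp; omega) h
      omega
    suffices IsInterior G (p.getVert (i + 1)) by simpa [interiorFinset] using this
    unfold IsInterior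
    rw [← card_neighborFinset_eq_degree, Nat.succ_le_iff, Finset.one_lt_card]
    exact ⟨_, by simpa using h1.symm, _, by simpa using h2, hne⟩
  · intro i hi j hj h
    have hi' : i < p.length - 1 := by simpa using hi
    have hj' : j < p.length - 1 := by simpa using hj
    have := hp.getVert_injOn (by simp; omega) (by simp; omega) h
    omega

lemma bound_of_diam (hG : IsTreeWithBoundary G) {x y : V} (hd : 0 < G.dist x y)
    (hmax : ∀ a b, G.dist a b ≤ G.dist x y) :
    2 - 2 * cos (π / G.dist x y) ≤ dirichletLambda G ∧
      (dirichletLambda G = 2 - 2 * cos (π / G.dist x y) →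
        ∀ v, IsInterior G v → G.degree v = 2) := by
  obtain ⟨f, hf⟩ := exists_eigenpair_dirichletLambda hG
  have hb := barta hG (g := superFun G x y) (μ := 2 - 2 * cos (π / G.dist x y))
    (superFun_nonneg hmax) (fun v hv => superFun_pos hG.1 hd hmax hv) (fun v hv => by
      obtain ⟨δ, hδ, h⟩ := superFun_lap hG.1 hd hmax hv
      have : (2 : ℝ) ≤ G.degree v := by exact_mod_cast hv
      nlinarith) hf
  refine ⟨hb.1, fun heq v hv => ?_⟩
  obtain ⟨δ, hδ, h⟩ := superFun_lap hG.1 hd hmax hv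
  rw [hb.2 heq v hv] at h
  have h2 : (G.degree v : ℝ) ≤ 2 := by
    by_contra hcon
    nlinarith [mul_pos (sub_pos.2 (not_le.1 hcon)) hδ]
  exact le_antisymm (by exact_mod_cast h2) hv

lemma cos_pi_div_lt {d n : ℕ} (hd : 0 < d) (hdn : d < n) :
    cos (π / d) < cos (π / n) := by
  have h1 : (0 : ℝ) < d := by exact_mod_cast hd
  have h2 : (d : ℝ) < n := by exact_mod_cast hdn
  refine cos_lt_cos_of_nonneg_of_le_pi (by positivity) ?_ ?_
  · exact div_le_self pi_pos.le (by exact_mod_cast hd)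
  · exact div_lt_div_of_pos_left pi_pos h1 h2

lemma lower_bound (hG : IsTreeWithBoundary G) {k : ℕ} (hk : (interiorFinset G).card = k) :
    2 - 2 * cos (π / (k + 1 : ℕ)) ≤ dirichletLambda G := by
  obtain ⟨x, y, hd, hmax⟩ := exists_diam hG
  have h1 := (bound_of_diam hG hd hmax).1
  have h2 := dist_le_card_interior hG.1 x y
  rw [hk] at h2
  rcases h2.eq_or_lt with h | h
  · rwa [h] at h1
  · linarith [cos_pi_div_lt hd h]

/-- A tree attaining the bound has diameter `k + 1` and all interior degrees equal to two. By the
degree sum formula it has exactly `k + 2` vertices, so a longest path exhausts it. -/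
lemma path_of_le (hG : IsTreeWithBoundary G) {k : ℕ} (hk : (interiorFinset G).card = k)
    (hle : dirichletLambda G ≤ 2 - 2 * cos (π / (k + 1 : ℕ))) :
    Nonempty (G ≃g pathGraph (k + 2)) := by
  obtain ⟨x, y, hd, hmax⟩ := exists_diam hG
  obtain ⟨h1, hdeg⟩ := bound_of_diam hG hd hmax
  have h2 := dist_le_card_interior hG.1 x y
  rw [hk] at h2
  have hdk : G.dist x y = k + 1 := by
    refine h2.eq_or_lt.resolve_right fun h => ?_
    linarith [cos_pi_div_lt hd h]
  rw [hdk] at hdeg h1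
  replace hdeg := hdeg (le_antisymm hle h1)
  have hcard : Fintype.card V = k + 2 := by
    have e1 := G.sum_degrees_eq_twice_card_edges
    have e2 := hG.1.card_edgeFinset
    have e3 : ∀ v, G.degree v = 1 + if IsInterior G v then 1 else 0 := fun v => by
      split_ifs with h
      · exact hdeg v h
      · exact (hG.isBoundary_or_isInterior v).resolve_right h
    have e4 : ∑ v, G.degree v = Fintype.card V + k := by
      rw [Finset.sum_congr rfl (fun v _ => e3 v), Finset.sum_add_distrib, Finset.sum_boole, ← hk]
      simp [interiorFinset]
    omega
  obtain ⟨p, hp, hpl⟩ := hG.1.connected.exists_path_of_dist x y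
  rw [hdk] at hpl
  have hinj : Function.Injective (fun i : Fin (k + 2) => p.getVert i) := fun i j h => by
    have := hp.getVert_injOn (x₁ := i) (x₂ := j) (by simp; omega) (by simp; omega) h
    exact Fin.ext this
  have hbij : Function.Bijective (fun i : Fin (k + 2) => p.getVert i) :=
    (Fintype.bijective_iff_injective_and_card _).2 ⟨hinj, by simp [hcard]⟩
  -- `p` is a geodesic, so adjacent vertices have consecutive positions on it.
  have hup : ∀ i, G.dist x (p.getVert i) ≤ i := fun i =>
    (dist_le (p.take i)).trans (by simp)
  have hdown : ∀ i, i ≤ k + 1 → k + 1 ≤ G.dist x (p.getVert i) + (k + 1 - i) := fun i hi => by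
    have t1 := hG.1.connected.dist_triangle (u := x) (v := p.getVert i) (w := y)
    have t2 := (dist_le (p.drop i)).trans_eq (p.drop_length i)
    omega
  have hdist : ∀ i, i ≤ k + 1 → G.dist x (p.getVert i) = i := fun i hi => by
    have := hup i
    have := hdown i hi
    omega
  refine ⟨(SimpleGraph.Iso.symm ⟨Equiv.ofBijective _ hbij, ?_⟩)⟩
  intro i j
  rw [pathGraph_adj]
  change G.Adj (p.getVert i) (p.getVert j) ↔ _
  constructor
  · intro h
    have := hG.1.dist_eq_dist_add_one_of_adj x h
    rw [hdist i (by omega), hdist j (by omega)] at this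
    omega
  · rintro (h | h)
    · rw [← h]
      exact p.adj_getVert_succ (by omega)
    · rw [← h]
      exact (p.adj_getVert_succ (by omega)).symm

end Bound

/-! ### The path -/

section Path

lemma pathGraph_neighborFinset_mid {k : ℕ} {i : Fin (k + 2)} (h0 : 0 < i.val) (h1 : i.val < k + 1) :
    (pathGraph (k + 2)).neighborFinset i
      = {(⟨i.val - 1, by omega⟩ : Fin (k + 2)), ⟨i.val + 1, by omega⟩} := by
  ext j
  simp only [mem_neighborFinset, pathGraph_adj, Finset.mem_insert, Finset.mem_singleton, Fin.ext_iff]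
  omega

lemma pathGraph_degree_mid {k : ℕ} {i : Fin (k + 2)} (h0 : 0 < i.val) (h1 : i.val < k + 1) :
    (pathGraph (k + 2)).degree i = 2 := by
  rw [← card_neighborFinset_eq_degree, pathGraph_neighborFinset_mid h0 h1]
  refine Finset.card_pair ?_
  simp only [ne_eq, Fin.ext_iff]
  omega

lemma pathGraph_degree_end {k : ℕ} {i : Fin (k + 2)} (h : i.val = 0 ∨ i.val = k + 1) :
    (pathGraph (k + 2)).degree i = 1 := by
  rw [← card_neighborFinset_eq_degree, Finset.card_eq_one]
  rcases h with h | h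
  · refine ⟨⟨1, by omega⟩, ?_⟩
    ext j
    simp only [mem_neighborFinset, pathGraph_adj, Finset.mem_singleton, Fin.ext_iff]
    omega
  · refine ⟨⟨k, by omega⟩, ?_⟩
    ext j
    simp only [mem_neighborFinset, pathGraph_adj, Finset.mem_singleton, Fin.ext_iff]
    omega

lemma pathGraph_isInterior_iff {k : ℕ} {i : Fin (k + 2)} :
    IsInterior (pathGraph (k + 2)) i ↔ 0 < i.val ∧ i.val < k + 1 := by
  unfold IsInterior
  by_cases h : 0 < i.val ∧ i.val < k + 1
  · simp [pathGraph_degree_mid h.1 h.2, h]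
  · rw [pathGraph_degree_end (by omega)]
    simp only [h]
    norm_num

lemma pathGraph_card_interior (k : ℕ) : (interiorFinset (pathGraph (k + 2))).card = k := by
  have : interiorFinset (pathGraph (k + 2)) =
      Finset.Ioo (0 : Fin (k + 2)) (Fin.last (k + 1)) := by
    ext i
    rw [interiorFinset, Finset.mem_filter, pathGraph_isInterior_iff, Finset.mem_Ioo]
    simp only [Finset.mem_univ, true_and, Fin.lt_def, Fin.val_zero, Fin.val_last]
  rw [this, Fin.card_Ioo]
  simp

lemma pathGraph_isTreeWithBoundary {k : ℕ} (hk : 1 ≤ k) :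
    IsTreeWithBoundary (pathGraph (k + 2)) := by
  refine ⟨isTree_iff_connected_and_card.2 ⟨pathGraph_connected _, ?_⟩,
    ⟨⟨1, by omega⟩, pathGraph_isInterior_iff.2 ⟨Nat.one_pos, Nat.lt_succ_of_le hk⟩⟩,
    ⟨0, pathGraph_degree_end (Or.inl rfl)⟩⟩
  have e1 := (pathGraph (k + 2)).sum_degrees_eq_twice_card_edges
  have e3 : ∀ v, (pathGraph (k + 2)).degree v
      = 1 + if IsInterior (pathGraph (k + 2)) v then 1 else 0 := fun v => by
    split_ifs with h
    · rw [pathGraph_isInterior_iff] at h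
      exact pathGraph_degree_mid h.1 h.2
    · rw [pathGraph_isInterior_iff] at h
      exact pathGraph_degree_end (by omega)
  have e4 : ∑ v, (pathGraph (k + 2)).degree v = k + 2 + k := by
    rw [Finset.sum_congr rfl (fun v _ => e3 v), Finset.sum_add_distrib, Finset.sum_boole]
    have := pathGraph_card_interior k
    unfold interiorFinset at this
    simp [this]
  rw [Nat.card_eq_fintype_card, ← edgeFinset_card, Nat.card_eq_fintype_card, Fintype.card_fin]
  omega

lemma pathGraph_eigenpair {k : ℕ} (hk : 1 ≤ k) :
    IsDirichletEigenpair (pathGraph (k + 2)) (2 - 2 * cos (π / (k + 1 : ℕ)))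
      (fun i => sin (π / (k + 1 : ℕ) * i.val)) := by
  have hk0 : (0 : ℝ) < (k + 1 : ℕ) := by positivity
  refine ⟨fun h => ?_, fun i hi => ?_, fun i hi => ?_⟩
  · have h1 := congrFun h ⟨1, by omega⟩
    have h2 : 0 < sin (π / (k + 1 : ℕ)) := sin_pos_of_pos_of_lt_pi (by positivity)
      (div_lt_self pi_pos (by exact_mod_cast (by omega)))
    simp only [Nat.cast_one, mul_one, Pi.zero_apply] at h1
    linarith
  · have : ¬ IsInterior (pathGraph (k + 2)) i := by
      unfold IsInterior
      rw [hi]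
      norm_num
    rw [pathGraph_isInterior_iff] at this
    have h : i.val = 0 ∨ i.val = k + 1 := by omega
    rcases h with h | h
    · simp [h]
    · simp only [h]
      rw [div_mul_cancel₀ _ hk0.ne', sin_pi]
  · rw [pathGraph_isInterior_iff] at hi
    unfold lapApply
    rw [pathGraph_degree_mid hi.1 hi.2, pathGraph_neighborFinset_mid hi.1 hi.2, Finset.sum_pair]
    · simp only [Nat.cast_sub (show 1 ≤ i.val from hi.1), Nat.cast_add, Nat.cast_one, mul_sub,
        mul_add, mul_one, sin_sub, sin_add]
      push_cast
      ring
    · simp only [ne_eq, Fin.ext_iff]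
      omega

variable {V : Type*} [Fintype V] {G : SimpleGraph V}

lemma IsDirichletEigenpair.comp_iso {W : Type*} [Fintype W] {H : SimpleGraph W} (φ : G ≃g H)
    {μ : ℝ} {f : W → ℝ} (hf : IsDirichletEigenpair H μ f) : IsDirichletEigenpair G μ (f ∘ φ) := by
  obtain ⟨h0, hb, hi⟩ := hf
  have hdeg : ∀ v, H.degree (φ v) = G.degree v := fun v => φ.degree_eq v
  refine ⟨fun h => h0 ?_, fun v hv => hb _ ?_, fun v hv => ?_⟩
  · ext w
    simpa using congrFun h (φ.symm w)
  · unfold IsBoundary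
    rw [hdeg]
    exact hv
  · rw [Function.comp_apply, ← hi (φ v) (by unfold IsInterior; rw [hdeg]; exact hv)]
    unfold lapApply
    rw [hdeg]
    congr 1
    refine Finset.sum_bij (fun w _ => φ w) ?_ ?_ ?_ ?_
    · intro w hw
      rw [mem_neighborFinset] at hw ⊢
      exact φ.map_adj_iff.2 hw
    · intro a _ b _ h
      exact φ.injective h
    · intro w hw
      refine ⟨φ.symm w, ?_, by simp⟩
      rw [mem_neighborFinset] at hw ⊢
      rw [← φ.map_adj_iff]
      simpa using hw
    · intro w _
      rfl

end Path

/-- **Theorem.** A tree `G` has the Faber-Krahn property in the class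
`T^(·,k)` of all trees with boundary with exactly `k` interior vertices
(arbitrary total number of vertices) if and only if `G` is a path with `k + 2`
vertices; `G` is then uniquely determined up to isomorphism. -/
theorem faberKrahn_fixedInterior (k : ℕ) (hk : 1 ≤ k)
    {V : Type} [Fintype V] [DecidableEq V]
    (G : SimpleGraph V) (hG : IsTreeWithBoundary G)
    (hGk : (interiorFinset G).card = k) :
    (∀ (m : ℕ) (G' : SimpleGraph (Fin m)), IsTreeWithBoundary G' →
        (interiorFinset G').card = k →
        dirichletLambda G ≤ dirichletLambda G')
      ↔ Nonempty (G ≃g SimpleGraph.pathGraph (k + 2)) := by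
  constructor
  · intro h
    refine path_of_le hG hGk ((h _ _ (pathGraph_isTreeWithBoundary hk)
      (pathGraph_card_interior k)).trans ?_)
    exact dirichletLambda_le (pathGraph_isTreeWithBoundary hk) (pathGraph_eigenpair hk)
  · rintro ⟨φ⟩ m G' hG' hGk'
    exact (dirichletLambda_le hG ((pathGraph_eigenpair hk).comp_iso φ)).trans
      (lower_bound hG' hGk')

end FK
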